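/- Let r₁, r₂ ∈ ℤ × ℤ be primitive vectors (i.e., the two coordinates of each vector are coprime), and set Δ = |r₁.1·r₂.2 − r₁.2·r₂.1|. If Δ ≥ 3, then there exists a natural number q with 1 ≤ q, 2q < Δ, gcd(q, Δ) = 1, such that either Δ divides both r₂.1 − q·r₁.1 and r₂.2 − q·r₁.2, or Δ divides both r₂.1 + q·r₁.1 and r₂.2 + q·r₁.2. Moreover, if Δ = 4 then q = 1, and if Δ = 5 then q = 1 or q = 2. -/

import Mathlib

/-- The jumping number of two slopes on a torus: if `r₁, r₂` are primitive
vectors in `ℤ × ℤ` and `Δ = |r₁.1·r₂.2 − r₁.2·r₂.1| ≥ 3`, then there is a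
jumping number `q` with `1 ≤ q`, `2q < Δ`, `gcd(q, Δ) = 1` such that
`r₂ ≡ ±q·r₁ (mod Δ)` componentwise; moreover `q = 1` if `Δ = 4`, and
`q = 1` or `2` if `Δ = 5`. -/
theorem jumping_number (r₁ r₂ : ℤ × ℤ)
    (h₁ : IsCoprime r₁.1 r₁.2) (h₂ : IsCoprime r₂.1 r₂.2)
    (Δ : ℕ) (hΔ : Δ = (r₁.1 * r₂.2 - r₁.2 * r₂.1).natAbs) (h3 : 3 ≤ Δ) :
    ∃ q : ℕ, 1 ≤ q ∧ 2 * q < Δ ∧ Nat.gcd q Δ = 1 ∧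
      (((Δ : ℤ) ∣ r₂.1 - (q : ℤ) * r₁.1 ∧ (Δ : ℤ) ∣ r₂.2 - (q : ℤ) * r₁.2) ∨
       ((Δ : ℤ) ∣ r₂.1 + (q : ℤ) * r₁.1 ∧ (Δ : ℤ) ∣ r₂.2 + (q : ℤ) * r₁.2)) ∧
      (Δ = 4 → q = 1) ∧ (Δ = 5 → q = 1 ∨ q = 2) := by
  obtain ⟨a, b⟩ := r₁
  obtain ⟨c, d⟩ := r₂
  obtain ⟨u, v, huv⟩ := h₁
  obtain ⟨s, t, hst⟩ := h₂
  simp only at huv hst hΔ ⊢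
  obtain ⟨k, hk⟩ : ∃ k, k = u * c + v * d := ⟨_, rfl⟩
  have hD : (Δ : ℤ) ∣ a * d - b * c := by
    rw [hΔ]; exact Int.natAbs_dvd.mpr dvd_rfl
  obtain ⟨e, he⟩ := hD
  have e1 : c = k * a - v * e * Δ := by
    subst hk; linear_combination (-c) * huv - v * he
  have e2 : d = k * b + u * e * Δ := by
    subst hk; linear_combination (-d) * huv + u * he
  have hcop : k * (s * a + t * b) + Δ * (e * (t * u - s * v)) = 1 := by
    linear_combination hst - s * e1 - t * e2
  clear hk hΔ he
  have hm0 : 0 ≤ k % (Δ : ℤ) := Int.emod_nonneg _ (by omega)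
  have hm1 : k % (Δ : ℤ) < Δ := Int.emod_lt_of_pos _ (by omega)
  have hdiv : k % (Δ : ℤ) + Δ * (k / Δ) = k := Int.emod_add_mul_ediv k Δ
  generalize k / (Δ : ℤ) = w at *
  obtain ⟨m, hm⟩ := Int.eq_ofNat_of_zero_le hm0
  rw [hm] at hm1 hdiv
  clear hm hm0
  have hmc : IsCoprime (m : ℤ) (Δ : ℤ) :=
    ⟨s * a + t * b, w * (s * a + t * b) + e * (t * u - s * v), by
      linear_combination hcop + (s * a + t * b) * hdiv⟩
  have hmc' : Nat.Coprime m Δ := Nat.isCoprime_iff_coprime.mp hmc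
  have hmlt : m < Δ := by exact_mod_cast hm1
  have hmpos : m ≠ 0 := by
    rintro rfl
    simp at hmc'
    omega
  have hmne : 2 * m ≠ Δ := by
    rintro h
    have h' : m ∣ Δ := ⟨2, by omega⟩
    have := Nat.Coprime.eq_one_of_dvd hmc' h'
    omega
  have key : ∃ q : ℕ, 1 ≤ q ∧ 2 * q < Δ ∧ Nat.gcd q Δ = 1 ∧
      (((Δ : ℤ) ∣ c - (q : ℤ) * a ∧ (Δ : ℤ) ∣ d - (q : ℤ) * b) ∨
       ((Δ : ℤ) ∣ c + (q : ℤ) * a ∧ (Δ : ℤ) ∣ d + (q : ℤ) * b)) := by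
    rcases lt_or_gt_of_ne hmne with h | h
    · refine ⟨m, by omega, h, hmc', Or.inl ⟨⟨w * a - v * e, ?_⟩, ⟨w * b + u * e, ?_⟩⟩⟩
      · linear_combination e1 - a * hdiv
      · linear_combination e2 - b * hdiv
    · refine ⟨Δ - m, by omega, by omega, ?_, Or.inr ⟨⟨w * a - v * e + a, ?_⟩,
        ⟨w * b + u * e + b, ?_⟩⟩⟩
      · exact (Nat.coprime_self_sub_left hmlt.le).mpr hmc'
      · rw [Nat.cast_sub hmlt.le]
        linear_combination e1 - a * hdiv
      · rw [Nat.cast_sub hmlt.le]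
        linear_combination e2 - b * hdiv
  obtain ⟨q, q1, q2, q3, q4⟩ := key
  exact ⟨q, q1, q2, q3, q4, by omega, by omega⟩
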